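/- The swapped-statistic universal confidence set is finite-sample valid: for every n ∈ ℕ and every significance level a ∈ (0,1), Pr_{θ*}(θ* ∈ C̄_n^a) ≥ 1 − a, where C̄_n^a = {θ ∈ Θ : Ū_{α,β,n}(θ) ≤ 1/a} and Ū_{α,β,n}(θ) = (U_{α,β,n}^0(θ) + U_{α,β,n}^1(θ))/2. -/

import Mathlib

open MeasureTheory ENNReal
open scoped BigOperators Classical

noncomputable section

/-- Division in `ℝ≥0∞` with the convention that the ratio is `0` when the
denominator is `0`. -/
def safeDiv (a b : ℝ≥0∞) : ℝ≥0∞ := if b = 0 then 0 else a / b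

variable {d : ℕ} {π : Fin d → Type*} [∀ i, MeasurableSpace (π i)]

/-- The marginal density on the coordinates in `S`, obtained by integrating a density
out over the coordinates in `[d] \ S` (as a function of the full vector, depending only
on the coordinates in `S`). -/
def marginal (μ : ∀ i, Measure (π i)) (S : Finset (Fin d))
    (f : (∀ i, π i) → ℝ≥0∞) : (∀ i, π i) → ℝ≥0∞ :=
  MeasureTheory.lmarginal μ Sᶜ f

/-- The conditional density of the coordinates in `T1` given the coordinates in `T2`,
with the convention that the ratio is `0` when the denominator is `0`. -/
def condDens (μ : ∀ i, Measure (π i)) (T1 T2 : Finset (Fin d))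
    (f : (∀ i, π i) → ℝ≥0∞) (x : ∀ i, π i) : ℝ≥0∞ :=
  safeDiv (marginal μ (T1 ∪ T2) f x) (marginal μ T2 f x)

/-- `𝕊_d`: the nonempty subsets of `[d]`. -/
abbrev Sd (d : ℕ) := {S : Finset (Fin d) // S.Nonempty}

/-- `𝕋_d`: ordered pairs of disjoint nonempty subsets of `[d]`. -/
abbrev Td (d : ℕ) := {T : Finset (Fin d) × Finset (Fin d) //
  T.1.Nonempty ∧ T.2.Nonempty ∧ Disjoint T.1 T.2}

/-- The individual composite likelihood
`p_{α,β}(x;θ) = ∏_S p_S(x_S;θ)^(α_S/γ) ∏_T p(x_{T←}|x_{T→};θ)^(β_T/γ)`,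
where `f = p(·;θ)` is the joint density. -/
def compLik (μ : ∀ i, Measure (π i)) (α : Sd d → ℝ) (β : Td d → ℝ) (γ : ℝ)
    (f : (∀ i, π i) → ℝ≥0∞) (x : ∀ i, π i) : ℝ≥0∞ :=
  (∏ S : Sd d, marginal μ S.1 f x ^ (α S / γ)) *
  (∏ T : Td d, condDens μ T.1.1 T.1.2 f x ^ (β T / γ))


/-!
Each marginal or conditional density ratio has expectation at most `1` under `p(·;θ*)`: a ratio of
marginals on `S` integrates, after integrating out `Sᶜ`, to at most the total mass of the numerator
density, while in a ratio of conditionals given `T` integrating out `Tᶜ` leaves the marginal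
`p_T(·;θ*)` times the integral of a conditional density, which is at most `1`. Since the exponents
`α_S/γ` and `β_T/γ` sum to `1`, Hölder's inequality carries this bound over to the composite
likelihood ratio of one observation, and independence to the product over a half-sample when the
other half, and hence the estimator, is held fixed. So each split statistic at `θ*`, and
therefore their average, has expectation at most `1`, and Markov's inequality concludes.
-/

section SafeDiv

lemma safeDiv_zero_right (a : ℝ≥0∞) : safeDiv a 0 = 0 := if_pos rfl

lemma safeDiv_of_ne_zero (a : ℝ≥0∞) {b : ℝ≥0∞} (hb : b ≠ 0) : safeDiv a b = a / b := if_neg hb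

lemma safeDiv_le_div (a b : ℝ≥0∞) : safeDiv a b ≤ a / b := by
  unfold safeDiv
  split_ifs
  · exact zero_le
  · exact le_rfl

lemma mul_safeDiv_le (a b : ℝ≥0∞) : b * safeDiv a b ≤ a :=
  (mul_le_mul_right (safeDiv_le_div a b) b).trans ENNReal.mul_div_le

lemma mul_safeDiv_cancel_of_safeDiv_ne_zero {a b : ℝ≥0∞} (h : safeDiv a b ≠ 0) :
    b * safeDiv a b = a := by
  have hb : b ≠ 0 := by
    rintro rfl
    exact h (safeDiv_zero_right a)
  rw [safeDiv_of_ne_zero a hb] at h ⊢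
  have hb_top : b ≠ ∞ := by
    rintro rfl
    exact h ENNReal.div_top
  exact ENNReal.mul_div_cancel hb hb_top

lemma mul_safeDiv_safeDiv_le (a b c : ℝ≥0∞) : a * safeDiv c (safeDiv a b) ≤ b * c := by
  by_cases h : safeDiv a b = 0
  · simp [h, safeDiv_zero_right]
  calc a * safeDiv c (safeDiv a b)
      = b * (safeDiv a b * safeDiv c (safeDiv a b)) := by
        rw [← mul_assoc, mul_safeDiv_cancel_of_safeDiv_ne_zero h]
    _ ≤ b * c := by gcongr; exact mul_safeDiv_le c _

lemma safeDiv_prod {ι : Type*} (s : Finset ι) (f g : ι → ℝ≥0∞) :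
    safeDiv (∏ i ∈ s, f i) (∏ i ∈ s, g i) = ∏ i ∈ s, safeDiv (f i) (g i) := by
  by_cases h : ∏ i ∈ s, g i = 0
  · obtain ⟨i, hi, hgi⟩ := Finset.prod_eq_zero_iff.1 h
    rw [h, safeDiv_zero_right, Finset.prod_eq_zero hi (by rw [hgi, safeDiv_zero_right])]
  have hg : ∀ i ∈ s, g i ≠ 0 := Finset.prod_ne_zero_iff.1 h
  rw [safeDiv_of_ne_zero _ h, div_eq_mul_inv,
    ENNReal.prod_inv_distrib fun i hi _ _ _ => Or.inl (hg i hi), ← Finset.prod_mul_distrib]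
  refine Finset.prod_congr rfl fun i hi => ?_
  rw [safeDiv_of_ne_zero _ (hg i hi), div_eq_mul_inv]

lemma safeDiv_rpow (a b : ℝ≥0∞) {w : ℝ} (hw : 0 ≤ w) :
    safeDiv (a ^ w) (b ^ w) = safeDiv a b ^ w := by
  rcases hw.eq_or_lt with rfl | hw_pos
  · simp [safeDiv]
  rcases eq_or_ne b 0 with rfl | hb
  · simp only [ENNReal.zero_rpow_of_pos hw_pos, safeDiv_zero_right]
  · have hbw : b ^ w ≠ 0 := by simp [ENNReal.rpow_eq_zero_iff, hb, hw]
    rw [safeDiv_of_ne_zero _ hbw, safeDiv_of_ne_zero _ hb, ENNReal.div_rpow_of_nonneg _ _ hw]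

lemma measurable_safeDiv {A : Type*} [MeasurableSpace A] {f g : A → ℝ≥0∞} (hf : Measurable f)
    (hg : Measurable g) : Measurable fun x => safeDiv (f x) (g x) :=
  Measurable.ite (hg (measurableSet_singleton 0)) measurable_const (hf.div hg)

lemma dependsOn_safeDiv {ι : Type*} {X : ι → Type*} {s : Set ι} {f g : (∀ i, X i) → ℝ≥0∞}
    (hf : DependsOn f s) (hg : DependsOn g s) : DependsOn (fun x => safeDiv (f x) (g x)) s :=
  fun x y h => by simp only [hf h, hg h]

lemma lintegral_safeDiv_prod_rpow_le_one {A ι : Type*} [MeasurableSpace A] {P : Measure A}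
    [Fintype ι] {f g : ι → A → ℝ≥0∞} {w : ι → ℝ} (hf : ∀ i, Measurable (f i))
    (hg : ∀ i, Measurable (g i)) (hw : ∀ i, 0 ≤ w i) (hw_sum : ∑ i, w i = 1)
    (hle : ∀ i, ∫⁻ x, safeDiv (g i x) (f i x) ∂P ≤ 1) :
    ∫⁻ x, safeDiv (∏ i, g i x ^ w i) (∏ i, f i x ^ w i) ∂P ≤ 1 :=
  calc ∫⁻ x, safeDiv (∏ i, g i x ^ w i) (∏ i, f i x ^ w i) ∂P
      = ∫⁻ x, ∏ i, safeDiv (g i x) (f i x) ^ w i ∂P := by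
        simp only [safeDiv_prod, safeDiv_rpow _ _ (hw _)]
    _ ≤ ∏ i, (∫⁻ x, safeDiv (g i x) (f i x) ∂P) ^ w i :=
        ENNReal.lintegral_prod_norm_pow_le _
          (fun i _ => (measurable_safeDiv (hg i) (hf i)).aemeasurable) hw_sum fun i _ => hw i
    _ ≤ 1 := Finset.prod_le_one' fun i _ => ENNReal.rpow_le_one (hle i) (hw i)

end SafeDiv

section ProbabilityBounds

lemma isProbabilityMeasure_withDensity_of_lintegral_eq_one {A : Type*} [MeasurableSpace A]
    {ν : Measure A} {f : A → ℝ≥0∞} (hf : ∫⁻ x, f x ∂ν = 1) :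
    IsProbabilityMeasure (ν.withDensity f) :=
  ⟨by rw [withDensity_apply _ MeasurableSet.univ, Measure.restrict_univ, hf]⟩

lemma lintegral_pi_prod_eq_prod_lintegral {ι : Type*} [Fintype ι] {A : ι → Type*}
    [∀ i, MeasurableSpace (A i)] (P : ∀ i, Measure (A i)) [∀ i, IsProbabilityMeasure (P i)]
    {f : ∀ i, A i → ℝ≥0∞} (hf : ∀ i, Measurable (f i)) :
    ∫⁻ x, ∏ i, f i (x i) ∂Measure.pi P = ∏ i, ∫⁻ y, f i y ∂P i := by
  have h_indep : ProbabilityTheory.iIndepFun (fun i (x : ∀ i, A i) => f i (x i)) (Measure.pi P) :=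
    ProbabilityTheory.iIndepFun_pi fun i => (hf i).aemeasurable
  rw [ProbabilityTheory.lintegral_prod_eq_prod_lintegral_of_indepFun _ _ h_indep
    fun i => (hf i).comp (measurable_pi_apply i)]
  exact Finset.prod_congr rfl fun i _ => (measurePreserving_eval P i).lintegral_comp (hf i)

lemma lintegral_prod_add_div_two_le_one {A B : Type*} [MeasurableSpace A] [MeasurableSpace B]
    {P : Measure A} {Q : Measure B} [IsProbabilityMeasure P] [IsProbabilityMeasure Q]
    {u v : A × B → ℝ≥0∞} (hu : Measurable u) (hv : Measurable v)
    (hu_le : ∀ y, ∫⁻ x, u (x, y) ∂P ≤ 1) (hv_le : ∀ x, ∫⁻ y, v (x, y) ∂Q ≤ 1) :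
    ∫⁻ z, (u z + v z) / 2 ∂P.prod Q ≤ 1 := by
  have hu_int : ∫⁻ z, u z ∂P.prod Q ≤ 1 := by
    rw [lintegral_prod_symm _ hu.aemeasurable]
    exact (lintegral_mono hu_le).trans (by simp)
  have hv_int : ∫⁻ z, v z ∂P.prod Q ≤ 1 := by
    rw [lintegral_prod _ hv.aemeasurable]
    exact (lintegral_mono hv_le).trans (by simp)
  have h_add : Measurable fun z => u z + v z := hu.add hv
  simp only [div_eq_mul_inv]
  rw [lintegral_mul_const _ h_add, lintegral_add_left hu, ← div_eq_mul_inv]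
  refine ENNReal.div_le_of_le_mul ?_
  calc (∫⁻ z, u z ∂P.prod Q) + ∫⁻ z, v z ∂P.prod Q ≤ 1 + 1 := add_le_add hu_int hv_int
    _ = 1 * 2 := by norm_num

lemma ofReal_one_sub_le_measure_le_one_div {Ω : Type*} [MeasurableSpace Ω] {P : Measure Ω}
    [IsProbabilityMeasure P] {u : Ω → ℝ≥0∞} (hu : AEMeasurable u P) (hu_le : ∫⁻ ω, u ω ∂P ≤ 1)
    {a : ℝ} (ha : 0 < a) :
    ENNReal.ofReal (1 - a) ≤ P {ω | u ω ≤ 1 / ENNReal.ofReal a} := by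
  have h_markov : P {ω | 1 / ENNReal.ofReal a < u ω} ≤ ENNReal.ofReal a :=
    calc P {ω | 1 / ENNReal.ofReal a < u ω}
        ≤ P {ω | 1 / ENNReal.ofReal a ≤ u ω} :=
          measure_mono (Set.ofPred_subset_ofPred.2 fun _ => le_of_lt)
      _ ≤ (∫⁻ ω, u ω ∂P) / (1 / ENNReal.ofReal a) :=
          meas_ge_le_lintegral_div hu (by simp) (by simpa using ha)
      _ ≤ 1 / (1 / ENNReal.ofReal a) := by gcongr
      _ = ENNReal.ofReal a := by simp
  have h_compl : {ω | u ω ≤ 1 / ENNReal.ofReal a} = {ω | 1 / ENNReal.ofReal a < u ω}ᶜ := by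
    ext ω
    simp
  have h_null : NullMeasurableSet {ω | 1 / ENNReal.ofReal a < u ω} P :=
    hu.nullMeasurable measurableSet_Ioi
  rw [h_compl, prob_compl_eq_one_sub₀ h_null,
    ENNReal.ofReal_sub _ ha.le, ENNReal.ofReal_one]
  gcongr

end ProbabilityBounds

section Marginal

lemma lmarginal_mul_of_dependsOn {δ : Type*} [DecidableEq δ] {X : δ → Type*}
    [∀ i, MeasurableSpace (X i)] (μ : ∀ i, Measure (X i)) {s : Finset δ} {t : Set δ}
    {f h : (∀ i, X i) → ℝ≥0∞} (hf : Measurable f) (hh : DependsOn h t) (hst : Disjoint t s) :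
    ∫⋯∫⁻_s, f * h ∂μ = (∫⋯∫⁻_s, f ∂μ) * h := by
  ext x
  have h_const (y : ∀ i : s, X i) : h (Function.updateFinset x s y) = h x :=
    hh fun i hi => dif_neg (Set.disjoint_left.1 hst hi)
  simp only [lmarginal, Pi.mul_apply, h_const]
  exact lintegral_mul_const _ (hf.comp measurable_updateFinset)

variable (μ : ∀ i, Measure (π i))

lemma dependsOn_marginal (S : Finset (Fin d)) (f : (∀ i, π i) → ℝ≥0∞) :
    DependsOn (marginal μ S f) (S : Set (Fin d)) :=
  fun _ _ h => lmarginal_congr μ f fun i hi => h i (by simpa using hi)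

lemma dependsOn_condDens (S T : Finset (Fin d)) (f : (∀ i, π i) → ℝ≥0∞) :
    DependsOn (condDens μ S T f) (S ∪ T : Finset (Fin d)) :=
  dependsOn_safeDiv (dependsOn_marginal μ _ f)
    ((dependsOn_marginal μ T f).mono (Finset.coe_subset.2 Finset.subset_union_right))

lemma marginal_mul_of_dependsOn {S : Finset (Fin d)} {f h : (∀ i, π i) → ℝ≥0∞}
    (hf : Measurable f) (hh : DependsOn h (S : Set (Fin d))) :
    marginal μ S (f * h) = marginal μ S f * h :=
  lmarginal_mul_of_dependsOn μ hf hh (Finset.disjoint_coe.2 disjoint_compl_right)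

variable [∀ i, SigmaFinite (μ i)] {S T : Finset (Fin d)} {f g : (∀ i, π i) → ℝ≥0∞}

lemma measurable_marginal (S : Finset (Fin d)) (hf : Measurable f) :
    Measurable (marginal μ S f) :=
  hf.lmarginal μ

lemma measurable_condDens (S T : Finset (Fin d)) (hf : Measurable f) :
    Measurable (condDens μ S T f) :=
  measurable_safeDiv (measurable_marginal μ _ hf) (measurable_marginal μ _ hf)

lemma lmarginal_marginal_union (hST : Disjoint S T) (hf : Measurable f) :
    ∫⋯∫⁻_S, marginal μ (S ∪ T) f ∂μ = marginal μ T f := by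
  have h_disj : Disjoint S (S ∪ T)ᶜ :=
    disjoint_compl_right.mono_left Finset.subset_union_left
  have h_union : S ∪ (S ∪ T)ᶜ = Tᶜ := by
    grind [Finset.disjoint_left, Finset.mem_compl]
  rw [marginal, ← lmarginal_union μ f hf h_disj, h_union, marginal]

lemma lmarginal_condDens_le_one (hST : Disjoint S T) (hf : Measurable f) :
    ∫⋯∫⁻_S, condDens μ S T f ∂μ ≤ 1 :=
  calc ∫⋯∫⁻_S, condDens μ S T f ∂μ
      ≤ ∫⋯∫⁻_S, marginal μ (S ∪ T) f * (marginal μ T f)⁻¹ ∂μ :=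
        lmarginal_mono fun x => safeDiv_le_div _ _
    _ = marginal μ T f * (marginal μ T f)⁻¹ := by
        have h_inv : DependsOn (marginal μ T f)⁻¹ (T : Set (Fin d)) :=
          fun x y h => congrArg (·⁻¹) (dependsOn_marginal μ T f h)
        rw [lmarginal_mul_of_dependsOn μ (measurable_marginal μ _ hf) h_inv
          (Finset.disjoint_coe.2 hST.symm), lmarginal_marginal_union μ hST hf]
    _ ≤ 1 := fun x => ENNReal.div_self_le_one

lemma lintegral_safeDiv_marginal_le (S : Finset (Fin d)) (hf : Measurable f)
    (hg : Measurable g) :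
    ∫⁻ x, safeDiv (marginal μ S g x) (marginal μ S f x) ∂(Measure.pi μ).withDensity f
      ≤ ∫⁻ x, g x ∂Measure.pi μ := by
  have h_meas := measurable_safeDiv (measurable_marginal μ S hg) (measurable_marginal μ S hf)
  rw [lintegral_withDensity_eq_lintegral_mul _ hf h_meas]
  refine lintegral_le_of_lmarginal_le Sᶜ (hf.mul h_meas) hg ?_
  change marginal μ S _ ≤ marginal μ S g
  rw [marginal_mul_of_dependsOn μ hf
    (dependsOn_safeDiv (dependsOn_marginal μ S g) (dependsOn_marginal μ S f))]
  exact fun x => mul_safeDiv_le _ _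

lemma marginal_mul_safeDiv_condDens_le (hST : Disjoint S T) (hf : Measurable f)
    (hg : Measurable g) :
    marginal μ T (f * fun x => safeDiv (condDens μ S T g x) (condDens μ S T f x))
      ≤ marginal μ T f := by
  have h_meas :=
    measurable_safeDiv (measurable_condDens μ S T hg) (measurable_condDens μ S T hf)
  have h_dep := dependsOn_safeDiv (dependsOn_condDens μ S T g) (dependsOn_condDens μ S T f)
  calc marginal μ T (f * fun x => safeDiv (condDens μ S T g x) (condDens μ S T f x))
      = ∫⋯∫⁻_S, marginal μ (S ∪ T) f *
          (fun x => safeDiv (condDens μ S T g x) (condDens μ S T f x)) ∂μ := by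
        rw [← lmarginal_marginal_union μ hST (hf.mul h_meas),
          marginal_mul_of_dependsOn μ hf h_dep]
    _ ≤ ∫⋯∫⁻_S, condDens μ S T g * marginal μ T f ∂μ :=
        lmarginal_mono fun x => (mul_safeDiv_safeDiv_le _ _ _).trans_eq (mul_comm _ _)
    _ = (∫⋯∫⁻_S, condDens μ S T g ∂μ) * marginal μ T f :=
        lmarginal_mul_of_dependsOn μ (measurable_condDens μ S T hg)
          (dependsOn_marginal μ T f) (Finset.disjoint_coe.2 hST.symm)
    _ ≤ marginal μ T f := mul_le_of_le_one_left' (lmarginal_condDens_le_one μ hST hg)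

lemma lintegral_safeDiv_condDens_le (hST : Disjoint S T) (hf : Measurable f)
    (hg : Measurable g) :
    ∫⁻ x, safeDiv (condDens μ S T g x) (condDens μ S T f x) ∂(Measure.pi μ).withDensity f
      ≤ ∫⁻ x, f x ∂Measure.pi μ := by
  have h_meas :=
    measurable_safeDiv (measurable_condDens μ S T hg) (measurable_condDens μ S T hf)
  rw [lintegral_withDensity_eq_lintegral_mul _ hf h_meas]
  exact lintegral_le_of_lmarginal_le Tᶜ (hf.mul h_meas) hf
    (marginal_mul_safeDiv_condDens_le μ hST hf hg)

lemma measurable_uncurry_marginal {Θ : Type*} [MeasurableSpace Θ] {p : Θ → (∀ i, π i) → ℝ≥0∞}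
    (hp : Measurable (Function.uncurry p)) (S : Finset (Fin d)) :
    Measurable (Function.uncurry fun θ => marginal μ S (p θ)) :=
  Measurable.lintegral_prod_right'
    (f := fun z : (Θ × (∀ i, π i)) × _ => p z.1.1 (Function.updateFinset z.1.2 Sᶜ z.2))
    (hp.comp (measurable_fst.fst.prodMk
      (measurable_updateFinset'.comp (measurable_fst.snd.prodMk measurable_snd))))

end Marginal

section CompositeLikelihood

/-- The densities entering a composite likelihood, as a single family: the marginal densities,
indexed by `Sd d`, together with the conditional densities, indexed by `Td d`. -/
def componentDens (μ : ∀ i, Measure (π i)) (f : (∀ i, π i) → ℝ≥0∞) :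
    Sd d ⊕ Td d → (∀ i, π i) → ℝ≥0∞ :=
  Sum.elim (fun S => marginal μ S.1 f) (fun T => condDens μ T.1.1 T.1.2 f)

/-- The normalized exponents `α_S / γ` and `β_T / γ` of a composite likelihood, indexed in the same
way as `componentDens`. -/
def componentWeight (α : Sd d → ℝ) (β : Td d → ℝ) (γ : ℝ) : Sd d ⊕ Td d → ℝ :=
  Sum.elim (fun S => α S / γ) (fun T => β T / γ)

/-- The composite likelihood ratio of the density `g` against the density `f` on the sample `x`.
The split statistic `U` is obtained by letting `g` be the density at the estimated parameter. -/
def compLikRatio {ι : Type*} [Fintype ι] (μ : ∀ i, Measure (π i)) (α : Sd d → ℝ) (β : Td d → ℝ)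
    (γ : ℝ) (g f : (∀ i, π i) → ℝ≥0∞) (x : ι → ∀ i, π i) : ℝ≥0∞ :=
  safeDiv (∏ j, compLik μ α β γ g (x j)) (∏ j, compLik μ α β γ f (x j))

variable {α : Sd d → ℝ} {β : Td d → ℝ} {γ : ℝ}

lemma componentWeight_nonneg (hα : ∀ S, 0 ≤ α S) (hβ : ∀ T, 0 ≤ β T) (hγ : 0 ≤ γ)
    (k : Sd d ⊕ Td d) : 0 ≤ componentWeight α β γ k := by
  rcases k with S | T
  · exact div_nonneg (hα S) hγ
  · exact div_nonneg (hβ T) hγ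

lemma sum_componentWeight (hγ_eq : γ = ∑ S, α S + ∑ T, β T) (hγ : γ ≠ 0) :
    ∑ k, componentWeight α β γ k = 1 := by
  simp only [componentWeight, Fintype.sum_sum_type, Sum.elim_inl, Sum.elim_inr, ← Finset.sum_div]
  rw [← add_div, ← hγ_eq, div_self hγ]

variable (μ : ∀ i, Measure (π i))

lemma compLik_eq_prod_componentDens (f : (∀ i, π i) → ℝ≥0∞) (x : ∀ i, π i) :
    compLik μ α β γ f x = ∏ k, componentDens μ f k x ^ componentWeight α β γ k := by
  simp [compLik, componentDens, componentWeight, Fintype.prod_sum_type]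

variable [∀ i, SigmaFinite (μ i)] {f g : (∀ i, π i) → ℝ≥0∞}

lemma measurable_componentDens (hf : Measurable f) (k : Sd d ⊕ Td d) :
    Measurable (componentDens μ f k) := by
  rcases k with S | T
  · exact measurable_marginal μ _ hf
  · exact measurable_condDens μ _ _ hf

lemma measurable_uncurry_compLik {Θ : Type*} [MeasurableSpace Θ] {p : Θ → (∀ i, π i) → ℝ≥0∞}
    (hp : Measurable (Function.uncurry p)) :
    Measurable (Function.uncurry fun θ => compLik μ α β γ (p θ)) := by
  have h_marg := measurable_uncurry_marginal μ hp
  exact (Finset.measurable_prod _ fun S _ => (h_marg S.1).pow_const _).mul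
    (Finset.measurable_prod _ fun T _ => (measurable_safeDiv (h_marg _) (h_marg _)).pow_const _)

lemma measurable_compLik (hf : Measurable f) : Measurable (compLik μ α β γ f) :=
  (measurable_uncurry_compLik μ (p := fun _ : Unit => f) (hf.comp measurable_snd)).of_uncurry_left
    (x := ())

lemma measurable_compLikRatio_comp {Θ A ι : Type*} [MeasurableSpace Θ] [MeasurableSpace A]
    [Fintype ι] {p : Θ → (∀ i, π i) → ℝ≥0∞} (hp : Measurable (Function.uncurry p)) (θ₀ : Θ)
    {t : A → Θ} (ht : Measurable t) {x : A → ι → ∀ i, π i} (hx : Measurable x) :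
    Measurable fun z => compLikRatio μ α β γ (p (t z)) (p θ₀) (x z) := by
  have h_lik {s : A → Θ} (hs : Measurable s) :
      Measurable fun z => ∏ j, compLik μ α β γ (p (s z)) (x z j) :=
    Finset.measurable_prod _ fun j _ =>
      (measurable_uncurry_compLik μ hp).comp (hs.prodMk (measurable_pi_iff.1 hx j))
  exact measurable_safeDiv (h_lik ht) (h_lik measurable_const)

lemma lintegral_safeDiv_componentDens_le_one (hf : Measurable f) (hg : Measurable g)
    (hf_le : ∫⁻ x, f x ∂Measure.pi μ ≤ 1) (hg_le : ∫⁻ x, g x ∂Measure.pi μ ≤ 1)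
    (k : Sd d ⊕ Td d) :
    ∫⁻ x, safeDiv (componentDens μ g k x) (componentDens μ f k x) ∂(Measure.pi μ).withDensity f
      ≤ 1 := by
  rcases k with S | T
  · exact (lintegral_safeDiv_marginal_le μ S.1 hf hg).trans hg_le
  · exact (lintegral_safeDiv_condDens_le μ T.2.2.2 hf hg).trans hf_le

lemma lintegral_safeDiv_compLik_le_one (hα : ∀ S, 0 ≤ α S) (hβ : ∀ T, 0 ≤ β T)
    (hγ_eq : γ = ∑ S, α S + ∑ T, β T) (hγ : 0 < γ) (hf : Measurable f) (hg : Measurable g)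
    (hf_le : ∫⁻ x, f x ∂Measure.pi μ ≤ 1) (hg_le : ∫⁻ x, g x ∂Measure.pi μ ≤ 1) :
    ∫⁻ x, safeDiv (compLik μ α β γ g x) (compLik μ α β γ f x) ∂(Measure.pi μ).withDensity f
      ≤ 1 := by
  simp only [compLik_eq_prod_componentDens]
  exact lintegral_safeDiv_prod_rpow_le_one (measurable_componentDens μ hf)
    (measurable_componentDens μ hg) (componentWeight_nonneg hα hβ hγ.le)
    (sum_componentWeight hγ_eq hγ.ne')
    (lintegral_safeDiv_componentDens_le_one μ hf hg hf_le hg_le)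

lemma lintegral_compLikRatio_le_one {ι : Type*} [Fintype ι] (hα : ∀ S, 0 ≤ α S)
    (hβ : ∀ T, 0 ≤ β T) (hγ_eq : γ = ∑ S, α S + ∑ T, β T) (hγ : 0 < γ) (hf : Measurable f)
    (hg : Measurable g) (hf_one : ∫⁻ x, f x ∂Measure.pi μ = 1)
    (hg_le : ∫⁻ x, g x ∂Measure.pi μ ≤ 1) :
    ∫⁻ x, compLikRatio μ α β γ g f x
      ∂Measure.pi (fun _ : ι => (Measure.pi μ).withDensity f) ≤ 1 := by
  have := isProbabilityMeasure_withDensity_of_lintegral_eq_one hf_one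
  simp only [compLikRatio, safeDiv_prod]
  rw [lintegral_pi_prod_eq_prod_lintegral _ fun _ =>
    measurable_safeDiv (measurable_compLik μ hg) (measurable_compLik μ hf)]
  exact Finset.prod_le_one' fun _ _ =>
    lintegral_safeDiv_compLik_le_one μ hα hβ hγ_eq hγ hf hg hf_one.le hg_le

end CompositeLikelihood

/-- The swapped-statistic universal confidence set is finite-sample
valid: for every `n ∈ ℕ` and every significance level `a ∈ (0,1)`,
`Pr_{θ*}(θ* ∈ C̄_n^a) ≥ 1 − a`, where `C̄_n^a = {θ : Ū_{α,β,n}(θ) ≤ 1/a}` and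
`Ū_{α,β,n}(θ) = (U_{α,β,n}^0(θ) + U_{α,β,n}^1(θ))/2`. -/
theorem swapped_confidence_set_valid
    {d : ℕ} (hd : 1 ≤ d)
    {π : Fin d → Type*} [∀ i, MeasurableSpace (π i)]
    (μ : ∀ i, Measure (π i)) [∀ i, SigmaFinite (μ i)]
    {Θ : Type*} [MeasurableSpace Θ]
    (p : Θ → (∀ i, π i) → ℝ≥0∞)
    (hp_meas : Measurable (Function.uncurry p))
    (hp_prob : ∀ θ : Θ, ∫⁻ x, p θ x ∂(Measure.pi μ) = 1)
    (α : Sd d → ℝ) (β : Td d → ℝ)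
    (hα : ∀ S, 0 ≤ α S) (hβ : ∀ T, 0 ≤ β T)
    (γ : ℝ) (hγ : γ = ∑ S, α S + ∑ T, β T) (hγpos : 0 < γ)
    {Ω : Type*} [MeasurableSpace Ω]
    (Pr : Measure Ω) [IsProbabilityMeasure Pr]
    (θstar : Θ) (n : ℕ)
    -- the two halves `X_n^0` and `X_n^1` of the i.i.d. sample of size `2n`
    (X0 X1 : Fin n → Ω → (∀ i, π i))
    (hX0 : ∀ j, Measurable (X0 j)) (hX1 : ∀ j, Measurable (X1 j))
    -- the `2n` observations are i.i.d. with density `p(·;θ*)` w.r.t. `μ`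
    (hlaw : Measure.map (fun ω => (fun j => X0 j ω, fun j => X1 j ω)) Pr
      = (Measure.pi fun _ : Fin n => (Measure.pi μ).withDensity (p θstar)).prod
          (Measure.pi fun _ : Fin n => (Measure.pi μ).withDensity (p θstar)))
    -- the estimators `θ̃_n^0`, `θ̃_n^1` are measurable functions of `X_n^0`, `X_n^1` alone
    (t0 t1 : (Fin n → ∀ i, π i) → Θ)
    (ht0 : Measurable t0) (ht1 : Measurable t1)
    (a : ℝ) (ha0 : 0 < a) (ha1 : a < 1) :
    ENNReal.ofReal (1 - a) ≤
      Pr {ω | (safeDiv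
            (∏ j : Fin n, compLik μ α β γ (p (t1 fun j' => X1 j' ω)) (X0 j ω))
            (∏ j : Fin n, compLik μ α β γ (p θstar) (X0 j ω))
          + safeDiv
            (∏ j : Fin n, compLik μ α β γ (p (t0 fun j' => X0 j' ω)) (X1 j ω))
            (∏ j : Fin n, compLik μ α β γ (p θstar) (X1 j ω))) / 2
          ≤ 1 / ENNReal.ofReal a} := by
  let u (z : (Fin n → ∀ i, π i) × (Fin n → ∀ i, π i)) : ℝ≥0∞ :=
    compLikRatio μ α β γ (p (t1 z.2)) (p θstar) z.1
  let v (z : (Fin n → ∀ i, π i) × (Fin n → ∀ i, π i)) : ℝ≥0∞ :=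
    compLikRatio μ α β γ (p (t0 z.1)) (p θstar) z.2
  have hu : Measurable u :=
    measurable_compLikRatio_comp μ hp_meas θstar (ht1.comp measurable_snd) measurable_fst
  have hv : Measurable v :=
    measurable_compLikRatio_comp μ hp_meas θstar (ht0.comp measurable_fst) measurable_snd
  have h_ratio (θ : Θ) := lintegral_compLikRatio_le_one (ι := Fin n) μ hα hβ hγ hγpos
    (hp_meas.of_uncurry_left (x := θstar)) (hp_meas.of_uncurry_left (x := θ))
    (hp_prob θstar) (hp_prob θ).le
  have := isProbabilityMeasure_withDensity_of_lintegral_eq_one (hp_prob θstar)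
  have hX : Measurable fun ω => (fun j => X0 j ω, fun j => X1 j ω) :=
    (measurable_pi_lambda _ hX0).prodMk (measurable_pi_lambda _ hX1)
  let w (z : (Fin n → ∀ i, π i) × (Fin n → ∀ i, π i)) : ℝ≥0∞ := (u z + v z) / 2
  have hw : Measurable w := (hu.add hv).div_const 2
  have hw_le : ∫⁻ ω, w (fun j => X0 j ω, fun j => X1 j ω) ∂Pr ≤ 1 := by
    rw [← lintegral_map hw hX, hlaw]
    exact lintegral_prod_add_div_two_le_one hu hv (h_ratio <| t1 ·) (h_ratio <| t0 ·)
  exact ofReal_one_sub_le_measure_le_one_div (hw.comp hX).aemeasurable hw_le ha0
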